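/- arXiv:2404.00396 — 5 statements merged into one kernel-verified Lean document; each statement's English description precedes it below -/
import Mathlib

section
/- For all units a, b in O_K^× = W(F_q)^×, the element 1 - a^{q-1} is divisible by p, and the assignment a ↦ c_a is a group homomorphism O_K^× → F_q: if x_a, x_b, x_{ab} ∈ O_K satisfy p·x_a = 1 - a^{q-1}, p·x_b = 1 - b^{q-1} and p·x_{ab} = 1 - (a·b)^{q-1}, then the residues satisfy x̄_{ab} = x̄_a + x̄_b in F_q. -/
/-- For all units `a, b` in `O_K^× = W(F_q)^×`, the element `1 - a^(q-1)` is divisible by `p`,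
and `a ↦ c_a` (the residue of `(1 - a^(q-1))/p`) is a group homomorphism `O_K^× → F_q`. -/
theorem statement0 (p f : ℕ) [Fact p.Prime] (hf : 1 ≤ f)
    (Fq : Type) [Field Fq] [Fintype Fq] (hcard : Fintype.card Fq = p ^ f) :
    (∀ a : (WittVector p Fq)ˣ, ∃ x : WittVector p Fq,
      (p : WittVector p Fq) * x = 1 - (a : WittVector p Fq) ^ (p ^ f - 1)) ∧
    (∀ (a b : (WittVector p Fq)ˣ) (xa xb xab : WittVector p Fq),
      (p : WittVector p Fq) * xa = 1 - (a : WittVector p Fq) ^ (p ^ f - 1) →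
      (p : WittVector p Fq) * xb = 1 - (b : WittVector p Fq) ^ (p ^ f - 1) →
      (p : WittVector p Fq) * xab
        = 1 - ((a : WittVector p Fq) * (b : WittVector p Fq)) ^ (p ^ f - 1) →
      xab.coeff 0 = xa.coeff 0 + xb.coeff 0) := by
  have hp : p.Prime := Fact.out
  have hchar : CharP Fq p := by
    obtain ⟨r, hr⟩ := CharP.exists Fq
    have := hr
    obtain ⟨n, hrp, hn⟩ := FiniteField.card Fq r
    have h : r ∣ p ^ f := by
      rw [← hcard, hn]
      exact dvd_pow_self r n.ne_zero
    have h2 : r = p := (Nat.prime_dvd_prime_iff_eq hrp hp).1 (hrp.dvd_of_dvd_pow h)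
    exact h2 ▸ hr
  have hperf : PerfectRing Fq p := inferInstance
  constructor
  · intro a
    have ha : (a : WittVector p Fq).coeff 0 ≠ 0 :=
      (a.isUnit.map (WittVector.constantCoeff : WittVector p Fq →+* Fq)).ne_zero
    have h0 : (1 - (a : WittVector p Fq) ^ (p ^ f - 1)).coeff 0 = 0 := by
      change WittVector.constantCoeff (1 - (a : WittVector p Fq) ^ (p ^ f - 1)) = 0
      rw [map_sub, map_one, map_pow, ← hcard, sub_eq_zero]
      exact (FiniteField.pow_card_sub_one_eq_one _ ha).symm
    obtain ⟨x, hx⟩ := (WittVector.frobenius_bijective p Fq).2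
      ((1 - (a : WittVector p Fq) ^ (p ^ f - 1)).shift 1)
    refine ⟨x, ?_⟩
    rw [mul_comm, ← WittVector.verschiebung_frobenius, hx]
    have := WittVector.verschiebung_shift (1 - (a : WittVector p Fq) ^ (p ^ f - 1)) 0
      (by intro i hi; obtain rfl : i = 0 := by omega
          exact h0)
    simpa [WittVector.ext_iff, WittVector.shift_coeff] using this
  · intro a b xa xb xab ha hb hab
    have h : xab = xa + xb - p * (xa * xb) := by
      apply mul_left_cancel₀ (WittVector.p_nonzero p Fq)
      have ha' := eq_sub_of_add_eq' (eq_sub_iff_add_eq.1 ha)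
      have hb' := eq_sub_of_add_eq' (eq_sub_iff_add_eq.1 hb)
      rw [hab, mul_pow, ha', hb']
      ring
    have h3 := congrArg (WittVector.constantCoeff : WittVector p Fq →+* Fq) h
    rw [map_sub, map_add, map_mul, map_natCast, CharP.cast_eq_zero, zero_mul, sub_zero] at h3
    exact h3
end

section
/- Let p be an odd prime, f ≥ 1 an integer, q = p^f, and M = 2p^{f-1}. Let n_0, n_1, ..., n_M be natural numbers with Σ_{i=0}^{M} n_i = q and Σ_{i=1}^{M} i·n_i ≤ 2p^{f-1} - 1. If the p-adic valuation of the multinomial coefficient q!/(n_0!·n_1!···n_M!) is at most 1, then either n_0 = q and n_i = 0 for all 1 ≤ i ≤ M, or n_0 = (p-1)·p^{f-1}, n_1 = p^{f-1} and n_i = 0 for all 2 ≤ i ≤ M. -/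
theorem dvd_of_val_le {p f : ℕ} (hp : p.Prime) (hf : 1 ≤ f) (s : Finset ℕ) (n : ℕ → ℕ)
    (hsum : ∑ i ∈ s, n i = p ^ f) (hval : padicValNat p (Nat.multinomial s n) ≤ 1)
    (i : ℕ) (hi : i ∈ s) : p ^ (f - 1) ∣ n i := by
  haveI : Fact p.Prime := ⟨hp⟩
  rcases Nat.eq_zero_or_pos (n i) with h0 | hpos
  · simp [h0]
  have hle : n i ≤ p ^ f := by
    rw [← hsum]; exact Finset.single_le_sum (fun _ _ => Nat.zero_le _) hi
  have hd : (p ^ f).choose (n i) ∣ Nat.multinomial s n := by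
    have h1 := Nat.multinomial_insert (s := s.erase i) (Finset.notMem_erase i s) n
    rw [Finset.insert_erase hi, Finset.add_sum_erase s n hi, hsum] at h1
    exact ⟨_, h1⟩
  have hc0 : (p ^ f).choose (n i) ≠ 0 := (Nat.choose_pos hle).ne'
  have hc : padicValNat p ((p ^ f).choose (n i)) ≤ 1 :=
    le_trans ((padicValNat_dvd_iff_le (Nat.multinomial_pos s n).ne').1
      (dvd_trans pow_padicValNat_dvd hd)) hval
  have hm : p ^ f ∣ (p ^ f).choose (n i) * n i := by
    obtain ⟨k, hk⟩ : ∃ k, n i = k + 1 := ⟨n i - 1, by omega⟩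
    obtain ⟨m, hm⟩ : ∃ m, p ^ f = m + 1 := ⟨p ^ f - 1, by omega⟩
    rw [hk, hm]
    exact ⟨_, (Nat.add_one_mul_choose_eq m k).symm⟩
  rw [padicValNat_dvd_iff_le (mul_ne_zero hc0 hpos.ne'), padicValNat.mul hc0 hpos.ne'] at hm
  rw [padicValNat_dvd_iff_le hpos.ne']
  omega

/-- Let `p` be an odd prime, `q = p^f`, `M = 2p^{f-1}`.  If `n_0 + ... + n_M = q`,
`Σ_{i=1}^{M} i·n_i ≤ 2p^{f-1} - 1`, and the `p`-adic valuation of the multinomial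
coefficient `q!/(n_0!···n_M!)` is at most `1`, then either `n_0 = q` and all other `n_i`
vanish, or `n_0 = (p-1)p^{f-1}`, `n_1 = p^{f-1}` and `n_i = 0` for `2 ≤ i ≤ M`. -/
theorem statement4 (p f : ℕ) (hp : p.Prime) (hodd : Odd p) (hf : 1 ≤ f)
    (n : ℕ → ℕ)
    (hsum : ∑ i ∈ Finset.range (2 * p ^ (f - 1) + 1), n i = p ^ f)
    (hwt : ∑ i ∈ Finset.Icc 1 (2 * p ^ (f - 1)), i * n i ≤ 2 * p ^ (f - 1) - 1)
    (hval : padicValNat p (Nat.multinomial (Finset.range (2 * p ^ (f - 1) + 1)) n) ≤ 1) :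
    (n 0 = p ^ f ∧ ∀ i, 1 ≤ i → i ≤ 2 * p ^ (f - 1) → n i = 0) ∨
    (n 0 = (p - 1) * p ^ (f - 1) ∧ n 1 = p ^ (f - 1) ∧
      ∀ i, 2 ≤ i → i ≤ 2 * p ^ (f - 1) → n i = 0) := by
  have key := dvd_of_val_le hp hf _ n hsum hval
  have hP : 0 < p ^ (f - 1) := pow_pos hp.pos _
  have hq : p ^ f = p * p ^ (f - 1) := by
    rw [← pow_succ', Nat.sub_add_cancel hf]
  have hterm : ∀ i, 1 ≤ i → i ≤ 2 * p ^ (f - 1) → i * n i ≤ 2 * p ^ (f - 1) - 1 := by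
    intro i h1 h2
    exact le_trans (Finset.single_le_sum (f := fun i => i * n i)
      (fun _ _ => Nat.zero_le _) (Finset.mem_Icc.2 ⟨h1, h2⟩)) hwt
  have hz : ∀ i, 2 ≤ i → i ≤ 2 * p ^ (f - 1) → n i = 0 := by
    intro i h1 h2
    by_contra hne
    have ha := Nat.le_of_dvd (Nat.pos_of_ne_zero hne) (key i (Finset.mem_range.2 (by omega)))
    have hb := hterm i (by omega) h2
    have hc := Nat.mul_le_mul h1 ha
    omega
  have hs : n 0 + n 1 = p ^ f := by
    rw [← hsum, ← Finset.sum_subset (s₁ := Finset.range 2)]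
    · simp [Finset.sum_range_succ]
    · intro x hx
      simp only [Finset.mem_range] at *
      omega
    · intro x hx hx2
      simp only [Finset.mem_range] at *
      exact hz x (by omega) (by omega)
  have h1 := hterm 1 le_rfl (by omega)
  obtain ⟨c, hc⟩ := key 1 (Finset.mem_range.2 (by omega))
  have hc2 : c < 2 := by
    by_contra hcon
    have := Nat.mul_le_mul_left (p ^ (f - 1)) (not_lt.1 hcon)
    omega
  interval_cases c
  · left
    refine ⟨by omega, fun i hi1 hi2 => ?_⟩
    rcases Nat.lt_or_ge i 2 with h | h
    · obtain rfl : i = 1 := by omega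
      omega
    · exact hz i h hi2
  · right
    refine ⟨?_, by omega, hz⟩
    rw [Nat.sub_mul]
    omega
end

section
/- Let F be a finite field of characteristic p, q = p^f with f ≥ 1, let h be an integer with 0 ≤ h ≤ q-2, and let λ ∈ F^×. Assume it is not the case that both h = 0 and λ = 1. If x ∈ F((T)) is a Laurent series whose coefficient of T^n vanishes unless (q-1) divides n, and which satisfies λ·φ_q(x) = T^{(q-1)h}·x, then x = 0. Consequently, for every y ∈ F((T)) the equation x - λ·T^{-(q-1)h}·φ_q(x) = y has at most one solution x among Laurent series supported on multiples of q-1. -/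
/-- Unless `h = 0` and `λ = 1`, any Laurent series `x` supported on multiples of `q-1` with
`λ·φ_q(x) = T^{(q-1)h}·x` vanishes; consequently `x - λ·T^{-(q-1)h}·φ_q(x) = y` has at most
one solution supported on multiples of `q-1`.  Here `φ_q` is the `F`-linear map
`Σ c_n T^n ↦ Σ c_n T^{qn}`, specified by its effect on coefficients. -/
theorem statement10 (p f q : ℕ) (hp : p.Prime) (hf : 1 ≤ f) (hq : q = p ^ f)
    (F : Type) [Field F] [Fintype F] [CharP F p]
    (φq : LaurentSeries F →ₗ[F] LaurentSeries F)
    (hφ1 : ∀ (x : LaurentSeries F) (n : ℤ), (φq x).coeff ((q : ℤ) * n) = x.coeff n)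
    (hφ2 : ∀ (x : LaurentSeries F) (m : ℤ), ¬ (q : ℤ) ∣ m → (φq x).coeff m = 0)
    (h : ℕ) (hh : h ≤ q - 2) (lam : Fˣ)
    (hne : ¬ (h = 0 ∧ (lam : F) = 1)) :
    (∀ x : LaurentSeries F,
      (∀ n : ℤ, ¬ ((q : ℤ) - 1) ∣ n → x.coeff n = 0) →
      (lam : F) • φq x = HahnSeries.single (((q : ℤ) - 1) * h) (1 : F) * x →
      x = 0) ∧
    (∀ y x₁ x₂ : LaurentSeries F,
      (∀ n : ℤ, ¬ ((q : ℤ) - 1) ∣ n → x₁.coeff n = 0) →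
      (∀ n : ℤ, ¬ ((q : ℤ) - 1) ∣ n → x₂.coeff n = 0) →
      x₁ - (lam : F) • (HahnSeries.single (-(((q : ℤ) - 1) * h)) (1 : F) * φq x₁) = y →
      x₂ - (lam : F) • (HahnSeries.single (-(((q : ℤ) - 1) * h)) (1 : F) * φq x₂) = y →
      x₁ = x₂) := by
  have hq2 : 2 ≤ q := by
    rw [hq]
    calc 2 ≤ p := hp.two_le
      _ = p ^ 1 := (pow_one p).symm
      _ ≤ p ^ f := Nat.pow_le_pow_right hp.pos hf
  have hq2' : (2 : ℤ) ≤ q := by exact_mod_cast hq2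
  have hhq : (h : ℤ) ≤ q - 2 := by omega
  have main : ∀ x : LaurentSeries F,
      (∀ n : ℤ, ¬ ((q : ℤ) - 1) ∣ n → x.coeff n = 0) →
      (lam : F) • φq x = HahnSeries.single (((q : ℤ) - 1) * h) (1 : F) * x →
      x = 0 := by
    intro x hx he
    by_contra hx0
    have key : ∀ a : ℤ, (lam : F) * (φq x).coeff (a + ((q : ℤ) - 1) * h) = x.coeff a := by
      intro a
      have := congrArg (fun z : LaurentSeries F => z.coeff (a + ((q : ℤ) - 1) * h)) he
      simpa [HahnSeries.coeff_single_mul_add] using this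
    obtain ⟨d, hd⟩ : ∃ d, d = x.order := ⟨_, rfl⟩
    have hdne : x.coeff d ≠ 0 := by
      rw [hd]; exact HahnSeries.coeff_order_eq_zero.not.mpr hx0
    have hmin : ∀ k, x.coeff k ≠ 0 → d ≤ k := by
      intro k hk
      rw [hd]; exact HahnSeries.order_le_of_coeff_ne_zero hk
    have h1 : (lam : F) * x.coeff d = x.coeff (q * d - ((q : ℤ) - 1) * h) := by
      have := key (q * d - ((q : ℤ) - 1) * h)
      rwa [sub_add_cancel, hφ1] at this
    have h2 : d ≤ q * d - ((q : ℤ) - 1) * h := by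
      apply hmin
      rw [← h1]
      exact mul_ne_zero lam.ne_zero hdne
    have h3 : (h : ℤ) ≤ d := by nlinarith
    have h4 : d ≤ h := by
      have hk := key d
      by_cases hdv : (q : ℤ) ∣ d + ((q : ℤ) - 1) * h
      · obtain ⟨k, hk'⟩ := hdv
        rw [hk', hφ1] at hk
        have : d ≤ k := hmin k (fun h0 => hdne (by rw [← hk, h0, mul_zero]))
        nlinarith
      · rw [hφ2 _ _ hdv, mul_zero] at hk
        exact absurd hk.symm hdne
    have h5 : d = h := le_antisymm h4 h3
    have h6 : ((q : ℤ) - 1) ∣ d := by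
      by_contra hc
      exact hdne (hx d hc)
    have h7 : d = 0 := Int.eq_zero_of_dvd_of_nonneg_of_lt (by omega) (by omega) h6
    have h8 : h = 0 := by omega
    apply hne
    refine ⟨h8, ?_⟩
    rw [h8, h7] at h1
    rw [h7] at hdne
    simp only [mul_zero, Nat.cast_zero, sub_zero] at h1
    exact mul_right_cancel₀ hdne (h1.trans (one_mul _).symm)
  refine ⟨main, ?_⟩
  intro y x₁ x₂ hx₁ hx₂ e₁ e₂
  rw [← sub_eq_zero]
  apply main
  · intro n hn
    simp [hx₁ n hn, hx₂ n hn]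
  · have e : x₁ - x₂ = (lam : F) •
        (HahnSeries.single (-(((q : ℤ) - 1) * h)) (1 : F) * φq (x₁ - x₂)) := by
      rw [map_sub, mul_sub, smul_sub]
      linear_combination e₁ - e₂
    ext n
    have e' := congrArg (fun z : LaurentSeries F => z.coeff (n + -(((q : ℤ) - 1) * h))) e
    simp only [HahnSeries.coeff_smul, HahnSeries.coeff_single_mul_add, one_mul] at e'
    have hr : (HahnSeries.single (((q : ℤ) - 1) * h) (1 : F) * (x₁ - x₂)).coeff n
        = (x₁ - x₂).coeff (n + -(((q : ℤ) - 1) * h)) := by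
      have := HahnSeries.coeff_single_mul_add (r := (1 : F)) (x := x₁ - x₂)
        (a := n + -(((q : ℤ) - 1) * h)) (b := ((q : ℤ) - 1) * h)
      rwa [neg_add_cancel_right, one_mul] at this
    rw [hr, e', HahnSeries.coeff_smul]
end

section
/- Let F be a finite field of characteristic p, q = p^f with f ≥ 1, let h be an integer with 0 ≤ h ≤ q-2, and let λ ∈ F^×. Let m, n ≥ -1 and t ≥ 0 be integers with m < t and n < t, and let a_0,...,a_m, b_0,...,b_n, c_0,...,c_t ∈ F be such that a_m ≠ 0 if m ≥ 0, b_n ≠ 0 if n ≥ 0, c_t ≠ 0, and t does not lie in h + qℤ. Set y = Σ_{i=0}^{m} a_i·T^{-(q-1)(h+qh+q²i)} + Σ_{j=0}^{n} b_j·T^{-(q-1)(h+qj)} + Σ_{k=0}^{t} c_k·T^{-(q-1)k} ∈ F((T)) (empty sums when m or n equals -1). Then there is no Laurent series x ∈ F((T)), supported on exponents divisible by q-1, satisfying x - λ·T^{-(q-1)h}·φ_q(x) = y. -/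
/-- With `y = Σ_{i=0}^{m} a_i T^{-(q-1)(h+qh+q²i)} + Σ_{j=0}^{n} b_j T^{-(q-1)(h+qj)}
+ Σ_{k=0}^{t} c_k T^{-(q-1)k}` where `m, n < t`, `a_m, b_n, c_t ≠ 0` and `t ∉ h + qℤ`,
the equation `x - λ·T^{-(q-1)h}·φ_q(x) = y` has no solution among Laurent series supported
on multiples of `q-1`.  We encode `m, n ≥ -1` by naturals `M = m+1`, `N = n+1` (so
`m < t ↔ M ≤ t`, and `a_m ≠ 0` when `m ≥ 0` becomes `M ≥ 1 → a (M-1) ≠ 0`). -/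
theorem statement11 (p f q : ℕ) (hp : p.Prime) (hf : 1 ≤ f) (hq : q = p ^ f)
    (F : Type) [Field F] [Fintype F] [CharP F p]
    (φq : LaurentSeries F →ₗ[F] LaurentSeries F)
    (hφ1 : ∀ (x : LaurentSeries F) (n : ℤ), (φq x).coeff ((q : ℤ) * n) = x.coeff n)
    (hφ2 : ∀ (x : LaurentSeries F) (m : ℤ), ¬ (q : ℤ) ∣ m → (φq x).coeff m = 0)
    (h : ℕ) (hh : h ≤ q - 2) (lam : Fˣ)
    (M N t : ℕ) (a b c : ℕ → F)
    (ha : 1 ≤ M → a (M - 1) ≠ 0) (hb : 1 ≤ N → b (N - 1) ≠ 0) (hc : c t ≠ 0)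
    (hMt : M ≤ t) (hNt : N ≤ t)
    (ht : ∀ k : ℤ, (t : ℤ) ≠ (h : ℤ) + (q : ℤ) * k) :
    ¬ ∃ x : LaurentSeries F,
      (∀ n : ℤ, ¬ ((q : ℤ) - 1) ∣ n → x.coeff n = 0) ∧
      x - (lam : F) • (HahnSeries.single (-(((q : ℤ) - 1) * h)) (1 : F) * φq x)
        = (∑ i ∈ Finset.range M,
            HahnSeries.single (-(((q : ℤ) - 1) * ((h : ℤ) + q * h + q ^ 2 * i))) (a i))
          + (∑ j ∈ Finset.range N,
              HahnSeries.single (-(((q : ℤ) - 1) * ((h : ℤ) + q * j))) (b j))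
          + (∑ k ∈ Finset.range (t + 1),
              HahnSeries.single (-(((q : ℤ) - 1) * k)) (c k)) := by
  rintro ⟨x, -, hx⟩
  have hq2 : 2 ≤ q := by
    rw [hq]
    exact hp.two_le.trans (Nat.le_self_pow (by omega) p)
  have hqz : (2 : ℤ) ≤ q := by exact_mod_cast hq2
  have hq1 : (q : ℤ) - 1 ≠ 0 := by omega
  have ht0 : 0 < h + t := by
    rcases Nat.eq_zero_or_pos (h + t) with h0 | h0
    · exfalso
      apply ht 0
      have : h = 0 := by omega
      have : t = 0 := by omega
      simp [*]
    · exact h0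
  -- coefficientwise form of the equation
  have key : ∀ k : ℤ, x.coeff (-(((q : ℤ) - 1) * k))
      - (lam : F) * (φq x).coeff (-(((q : ℤ) - 1) * (k - h)))
      = (∑ i ∈ Finset.range M, if k = (h : ℤ) + q * h + q ^ 2 * i then a i else 0)
        + (∑ j ∈ Finset.range N, if k = (h : ℤ) + q * j then b j else 0)
        + (∑ l ∈ Finset.range (t + 1), if k = (l : ℤ) then c l else 0) := by
    intro k
    have h1 := congrArg (fun z : LaurentSeries F => z.coeff (-(((q : ℤ) - 1) * k))) hx
    have h2 : (HahnSeries.single (-(((q : ℤ) - 1) * h)) (1 : F) * φq x).coeff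
        (-(((q : ℤ) - 1) * k)) = (φq x).coeff (-(((q : ℤ) - 1) * (k - h))) := by
      have h3 : -(((q : ℤ) - 1) * k)
        = -(((q : ℤ) - 1) * (k - h)) + -(((q : ℤ) - 1) * h) := by ring
      rw [h3, HahnSeries.coeff_single_mul_add, one_mul]
    simp only [HahnSeries.coeff_sub, HahnSeries.coeff_add, HahnSeries.coeff_smul, h2,
      HahnSeries.coeff_sum, HahnSeries.coeff_single, smul_eq_mul, neg_inj,
      mul_right_inj' hq1] at h1
    exact h1
  -- the orbit of t
  obtain ⟨s, s0, s1⟩ : ∃ s : ℕ → ℕ, s 0 = t ∧ ∀ r, s (r + 1) = h + q * s r :=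
    ⟨fun r => Nat.rec t (fun _ k => h + q * k) r, rfl, fun _ => rfl⟩
  have hs : ∀ r, t + r ≤ s r := by
    intro r
    induction r with
    | zero => simp [s0]
    | succ r ih =>
      rw [s1]
      have : 2 * s r ≤ q * s r := Nat.mul_le_mul_right _ hq2
      omega
  have hX : ∀ r, x.coeff (-(((q : ℤ) - 1) * ((s r : ℕ) : ℤ))) = (lam : F) ^ r * c t := by
    intro r
    induction r with
    | zero =>
      have h1 := key t
      rw [hφ2 x] at h1
      · rw [Finset.sum_eq_zero, Finset.sum_eq_zero, Finset.sum_eq_single t] at h1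
        · simpa [s0] using h1
        · intro l _ hl
          rw [if_neg]
          exact fun h => hl (by exact_mod_cast h.symm)
        · simp
        · intro j _
          rw [if_neg (ht j)]
        · intro i _
          rw [if_neg]
          intro h
          apply ht (_ + q * i)
          rw [h]; ring
      · rintro ⟨d, hd⟩
        apply ht (d + (t - h))
        linear_combination hd
    | succ r ih =>
      have h1 := key ((s (r + 1) : ℕ) : ℤ)
      have h4 : -(((q : ℤ) - 1) * (((s (r + 1) : ℕ) : ℤ) - h))
          = q * -(((q : ℤ) - 1) * ((s r : ℕ) : ℤ)) := by
        rw [s1]; push_cast; ring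
      rw [h4, hφ1, ih, Finset.sum_eq_zero, Finset.sum_eq_zero, Finset.sum_eq_zero] at h1
      · rw [pow_succ]
        linear_combination h1
      · intro l hl
        have := hs (r + 1)
        rw [Finset.mem_range] at hl
        rw [if_neg]
        intro h; norm_cast at h; omega
      · intro j hj
        have := hs r
        rw [Finset.mem_range] at hj
        rw [if_neg]
        intro h; norm_cast at h
        rw [s1] at h
        have := Nat.eq_of_mul_eq_mul_left (by omega) (Nat.add_left_cancel h)
        omega
      · intro i hi
        rw [Finset.mem_range] at hi
        rw [if_neg]
        intro h'
        have h5 : ((s r : ℕ) : ℤ) = h + q * i := by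
          have h6 : (q : ℤ) * ((s r : ℕ) : ℤ) = q * (h + q * i) := by
            rw [s1] at h'; push_cast at h'
            linear_combination h'
          exact mul_left_cancel₀ (by omega) h6
        cases r with
        | zero => exact ht i (s0 ▸ h5)
        | succ r =>
          have := hs r
          rw [s1] at h5
          norm_cast at h5
          have := Nat.eq_of_mul_eq_mul_left (by omega) (Nat.add_left_cancel h5)
          omega
  have h7 := hX (x.order.natAbs + 1)
  rw [HahnSeries.coeff_eq_zero_of_lt_order] at h7
  · exact mul_ne_zero (pow_ne_zero _ lam.ne_zero) hc h7.symm
  · have h8 := hs (x.order.natAbs + 1)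
    have h9 : ((s (x.order.natAbs + 1) : ℕ) : ℤ) ≤ ((q : ℤ) - 1) * ((s (x.order.natAbs + 1) : ℕ) : ℤ) := by
      nlinarith [Int.natCast_nonneg (s (x.order.natAbs + 1))]
    omega
end

section
/- Let B and B' be matrices over F whose rows and columns are indexed by the subsets of 𝒥 = {0,...,f-1}, each with all entries nonzero and each satisfying the cross-ratio condition. Suppose that for every subset J ⊆ 𝒥 one has B_{J,∅}·B'_{J^c,∅}·B'_{J,J^c} = B'_{J,∅}·B_{J^c,∅}·B_{J,J^c} (i.e. the quantities B_{J,∅}/(B_{J^c,∅}·B_{J,J^c}) agree for B and B'). Then there exists a function d from the subsets of 𝒥 to F^× such that B'_{J,J'} = d(J)·B_{J,J'}·d(J')^{-1} for all subsets J, J' ⊆ 𝒥; that is, B' is obtained from B by conjugation by an invertible diagonal matrix. -/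
/-- If two matrices `B, B'` indexed by subsets of `𝒥 = {0,...,f-1}`, with nonzero entries
and satisfying the cross-ratio condition, have the same quantities
`B_{J,∅}/(B_{J^c,∅}·B_{J,J^c})` for all `J`, then `B'` is obtained from `B` by conjugation
by an invertible diagonal matrix. -/
theorem statement14 (f : ℕ) (hf : 1 ≤ f) (F : Type) [Field F]
    (B B' : Finset (Fin f) → Finset (Fin f) → F)
    (hB : ∀ J J', B J J' ≠ 0) (hB' : ∀ J J', B' J J' ≠ 0)
    (hcrossB : ∀ J₁ J₂ J₃ J₄, B J₁ J₃ * B J₂ J₄ = B J₁ J₄ * B J₂ J₃)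
    (hcrossB' : ∀ J₁ J₂ J₃ J₄, B' J₁ J₃ * B' J₂ J₄ = B' J₁ J₄ * B' J₂ J₃)
    (hagree : ∀ J : Finset (Fin f),
      B J ∅ * (B' Jᶜ ∅ * B' J Jᶜ) = B' J ∅ * (B Jᶜ ∅ * B J Jᶜ)) :
    ∃ d : Finset (Fin f) → Fˣ,
      ∀ J J', B' J J' = (d J : F) * B J J' * ((d J')⁻¹ : Fˣ) := by
  have hdiag : ∀ K, B' K K = B K K := by
    intro K
    have h := hagree Kᶜ
    rw [compl_compl] at h
    have h1 := hcrossB' K Kᶜ ∅ K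
    have h2 := hcrossB K Kᶜ ∅ K
    rw [h1, h2] at h
    have h3 : B Kᶜ ∅ * B' Kᶜ ∅ ≠ 0 := mul_ne_zero (hB _ _) (hB' _ _)
    apply mul_left_cancel₀ h3
    linear_combination h
  refine ⟨fun J => Units.mk0 (B' J ∅) (hB' _ _) * (Units.mk0 (B J ∅) (hB _ _))⁻¹, ?_⟩
  intro J J'
  have h1 := hcrossB' J J' J' ∅
  have h2 := hcrossB J J' J' ∅
  rw [hdiag J'] at h1
  have n1 := hB J ∅
  have n2 := hB' J' ∅
  have n3 := hB J' ∅
  have n4 := hB' J ∅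
  simp only [mul_inv_rev, inv_inv, Units.val_mul, Units.val_inv_eq_inv_val, Units.val_mk0]
  field_simp
  linear_combination B J ∅ * h1 - B' J ∅ * h2
end
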